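/- The group of connected components of F⁻¹(Λ̂)/Λ̂ (with the subspace topology inside the torus t/Λ̂) is isomorphic to the group of homomorphisms from the group of connected components of F⁻¹(Λ)/Λ (with the subspace topology inside the torus t/Λ) to ℚ/ℤ; in particular these two component groups are finite abelian groups of the same cardinality. -/

import Mathlib

open scoped RealInnerProductSpace

/-!
Let `F : E → V` be a linear map between Euclidean spaces mapping a lattice `Λ` into a lattice
`Λ'`, and let `F†` be its adjoint, which maps `Λ̂'` into `Λ̂`. Since `Λ'` is discrete, the image
of `ker F` is open in `F⁻¹(Λ')/Λ`; as it is also connected,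
`π₀(F⁻¹(Λ')/Λ) = F⁻¹(Λ') / (ker F + Λ)`, which is finite by compactness of the torus. The form
`⟪x, F y⟫ = ⟪F† x, y⟫` modulo `1` pairs `F†⁻¹(Λ̂)` with `F⁻¹(Λ')`. If `x` is in its left kernel,
then `⟪x, ·⟫` is integral on `Λ' ∩ range F`, which is a direct summand of `Λ'`; hence it agrees
there with some `⟪z, ·⟫`, `z ∈ Λ̂'`, and `x - z ∈ ker F†` because `Λ` spans `E`. So the left
kernel is `ker F† + Λ̂'`, and by symmetry the right kernel is `ker F + Λ`. The pairing thus
induces a perfect duality of finite groups. For `F = L - 1` with `L` orthogonal, `L F† = -F`, so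
that `F†⁻¹(Λ̂) = F⁻¹(Λ̂)` when `L` preserves `Λ`.
-/

section RationalCircle

/-- The map `ℚ/ℤ → K/ℤ` induced by the inclusion `ℚ → K`. -/
def ratAddCircleCast (K : Type*) [DivisionRing K] [CharZero K] :
    AddCircle (1 : ℚ) →+ AddCircle (1 : K) :=
  QuotientAddGroup.map _ _ (Rat.castHom K).toAddMonoidHom <| by
    simp [← AddSubgroup.map_le_iff_le_comap, AddMonoidHom.map_zmultiples]

theorem addCircle_one_coe_eq_zero_iff {R : Type*} [Ring R] {x : R} :
    (x : AddCircle (1 : R)) = 0 ↔ ∃ n : ℤ, x = n := by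
  rw [AddCircle.coe_eq_zero_iff]
  simp only [zsmul_one, eq_comm]

variable {K : Type*} [DivisionRing K] [CharZero K]

theorem ratAddCircleCast_coe (q : ℚ) :
    ratAddCircleCast K q = ((q : K) : AddCircle (1 : K)) :=
  rfl

theorem ratAddCircleCast_injective : Function.Injective (ratAddCircleCast K) := by
  refine (injective_iff_map_eq_zero _).2 fun a ↦ QuotientAddGroup.induction_on a fun q hq ↦ ?_
  rw [ratAddCircleCast_coe, addCircle_one_coe_eq_zero_iff] at hq
  exact addCircle_one_coe_eq_zero_iff.2 (mod_cast hq)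

theorem mem_range_ratAddCircleCast_of_isOfFinAddOrder {a : AddCircle (1 : K)}
    (ha : IsOfFinAddOrder a) : a ∈ (ratAddCircleCast K).range := by
  obtain ⟨n, hn, hna⟩ := isOfFinAddOrder_iff_nsmul_eq_zero.1 ha
  obtain ⟨r, rfl⟩ := QuotientAddGroup.mk_surjective a
  obtain ⟨m, hm⟩ : ∃ m : ℤ, n • r = m := addCircle_one_coe_eq_zero_iff.1 hna
  have hr : ((m / n : ℚ) : K) = r := by
    have hn' : (n : K) ≠ 0 := mod_cast hn.ne'
    rw [nsmul_eq_mul, (Nat.cast_commute n r).eq] at hm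
    push_cast
    rw [← hm, mul_div_cancel_right₀ r hn']
  exact ⟨((m / n : ℚ) : AddCircle (1 : ℚ)), by rw [ratAddCircleCast_coe, hr]⟩

/-- On a torsion group, homomorphisms to `ℚ/ℤ` and to `K/ℤ` are the same thing. -/
noncomputable def addMonoidHomRatAddCircleEquiv {C : Type*} [AddCommGroup C]
    (hC : IsAddTorsion C) :
    (C →+ AddCircle (1 : ℚ)) ≃+ (C →+ AddCircle (1 : K)) :=
  AddEquiv.ofBijective (AddMonoidHom.compHom (ratAddCircleCast K)) <| by
    refine ⟨fun f g hfg ↦ AddMonoidHom.ext fun c ↦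
      ratAddCircleCast_injective (DFunLike.congr_fun hfg c), fun f ↦ ?_⟩
    let toRange := AddMonoidHom.ofInjective (ratAddCircleCast_injective (K := K))
    refine ⟨toRange.symm.toAddMonoidHom.comp (f.codRestrict _ fun c ↦
      mem_range_ratAddCircleCast_of_isOfFinAddOrder (f.isOfFinAddOrder (hC c))), ?_⟩
    ext c
    exact congrArg Subtype.val (toRange.apply_symm_apply _)

end RationalCircle

section Pairing

variable {A C : Type*} [AddCommGroup A] [AddCommGroup C] {T : ℝ}

/-- The complex character `c ↦ exp (2πi f(c) / T)` attached to a homomorphism `f` to `ℝ/Tℤ`. -/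
noncomputable def addCharOfAddCircle (f : C →+ AddCircle T) : AddChar C ℂ :=
  (Circle.coeHom.compAddChar AddCircle.toCircle_addChar).compAddMonoidHom f

variable [NeZero T]

theorem addCharOfAddCircle_injective :
    Function.Injective (addCharOfAddCircle : (C →+ AddCircle T) → AddChar C ℂ) :=
  AddChar.compAddMonoidHom_injective_right _ <|
    Circle.coe_injective.comp (AddCircle.injective_toCircle (NeZero.ne T))

instance finite_addMonoidHom_addCircle [Finite C] : Finite (C →+ AddCircle T) :=
  .of_injective _ addCharOfAddCircle_injective

theorem card_addMonoidHom_addCircle_le [Finite C] :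
    Nat.card (C →+ AddCircle T) ≤ Nat.card C := by
  cases nonempty_fintype C
  refine (Nat.card_le_card_of_injective _ addCharOfAddCircle_injective).trans ?_
  simpa only [Nat.card_eq_fintype_card] using AddChar.card_addChar_le C ℂ

theorem card_le_card_of_injective_pairing [Finite C] {B : A →+ C →+ AddCircle T}
    (hB : Function.Injective B) : Nat.card A ≤ Nat.card C :=
  (Nat.card_le_card_of_injective B hB).trans card_addMonoidHom_addCircle_le

theorem card_eq_card_of_injective_pairing [Finite A] [Finite C] {B : A →+ C →+ AddCircle T}
    (hB : Function.Injective B) (hBflip : Function.Injective B.flip) :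
    Nat.card A = Nat.card C :=
  (card_le_card_of_injective_pairing hB).antisymm (card_le_card_of_injective_pairing hBflip)

theorem bijective_of_injective_pairing [Finite A] [Finite C]
    {B : A →+ C →+ AddCircle T} (hB : Function.Injective B)
    (hBflip : Function.Injective B.flip) : Function.Bijective B :=
  (Nat.bijective_iff_injective_and_card B).2 ⟨hB,
    (Nat.card_le_card_of_injective B hB).antisymm <| card_addMonoidHom_addCircle_le.trans
      (card_eq_card_of_injective_pairing hB hBflip).ge⟩

variable {P Q : Type*} [AddCommGroup P] [AddCommGroup Q]

theorem exists_pairing_of_surjective {M : Type*} [AddCommGroup M] {p : P →+ A} {q : Q →+ C}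
    (hp : Function.Surjective p) (hq : Function.Surjective q) (B : P →+ Q →+ M)
    (hpB : p.ker ≤ B.ker) (hqB : q.ker ≤ B.flip.ker) :
    ∃ b : A →+ C →+ M, ∀ x y, b (p x) (q y) = B x y := by
  let Bq : C →+ P →+ M := q.liftOfSurjective hq ⟨B.flip, hqB⟩
  have hBq (x y) : Bq (q y) x = B x y :=
    DFunLike.congr_fun (AddMonoidHom.liftOfRightInverse_comp_apply q _ _ ⟨B.flip, hqB⟩ y) x
  have hpBq : p.ker ≤ Bq.flip.ker := fun x hx ↦ by
    ext c
    obtain ⟨y, rfl⟩ := hq c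
    exact (hBq x y).trans (DFunLike.congr_fun (hpB hx) y)
  refine ⟨p.liftOfSurjective hp ⟨Bq.flip, hpBq⟩, fun x y ↦ ?_⟩
  rw [AddMonoidHom.liftOfRightInverse_comp_apply]
  exact hBq x y

theorem exists_nondegenerate_pairing_of_surjective {M : Type*} [AddCommGroup M]
    {p : P →+ A} {q : Q →+ C} (hp : Function.Surjective p) (hq : Function.Surjective q)
    (B : P →+ Q →+ M) (hpB : p.ker = B.ker) (hqB : q.ker = B.flip.ker) :
    ∃ b : A →+ C →+ M, Function.Injective b ∧ Function.Injective b.flip := by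
  obtain ⟨b, hb⟩ := exists_pairing_of_surjective hp hq B hpB.le hqB.le
  refine ⟨b, (injective_iff_map_eq_zero b).2 fun a ha ↦ ?_,
    (injective_iff_map_eq_zero b.flip).2 fun c hc ↦ ?_⟩
  · obtain ⟨x, rfl⟩ := hp a
    refine hpB.ge <| AddMonoidHom.ext fun y ↦ ?_
    exact (hb x y).symm.trans (DFunLike.congr_fun ha _)
  · obtain ⟨y, rfl⟩ := hq c
    refine hqB.ge <| AddMonoidHom.ext fun x ↦ ?_
    exact (hb x y).symm.trans (DFunLike.congr_fun hc _)

end Pairing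

section ConnectedComponent

variable {G : Type*} [TopologicalSpace G] [AddGroup G] [IsTopologicalAddGroup G]

theorem connectedComponentOfZero_eq_of_isOpen_of_isPreconnected {H : AddSubgroup G}
    (hopen : IsOpen (H : Set G)) (hconn : IsPreconnected (H : Set G)) :
    AddSubgroup.connectedComponentOfZero G = H :=
  have hclopen : IsClopen (H : Set G) := ⟨H.isClosed_of_isOpen hopen, hopen⟩
  SetLike.coe_injective <| (hclopen.connectedComponent_subset H.zero_mem).antisymm
    (hconn.subset_connectedComponent H.zero_mem)

theorem isOpenMap_addSubgroupMap_mk' {N Y : AddSubgroup G} [N.Normal] (hNY : N ≤ Y) :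
    IsOpenMap ((QuotientAddGroup.mk' N).addSubgroupMap Y) := by
  rintro _ ⟨V, hV, rfl⟩
  refine isOpen_induced_iff.2 ⟨_, QuotientAddGroup.isOpenMap_coe V hV, Set.ext ?_⟩
  rintro ⟨_, y, hy, rfl⟩
  constructor
  · rintro ⟨v, hv, hvy⟩
    have : v ∈ Y := by
      simpa using Y.sub_mem hy (hNY (QuotientAddGroup.eq.1 hvy))
    exact ⟨⟨v, this⟩, hv, Subtype.ext hvy⟩
  · rintro ⟨v, hv, hvy⟩
    exact ⟨v, hv, congrArg Subtype.val hvy⟩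

end ConnectedComponent

section Torus

variable {E V : Type*} [NormedAddCommGroup E] [NormedSpace ℝ E]
  [NormedAddCommGroup V] [NormedSpace ℝ V]
  (Λ : Submodule ℤ E) (Λ' : Submodule ℤ V) (F : E →ₗ[ℝ] V)

/-- The lift `F⁻¹(Λ')` to `E` of the kernel of the map of tori `E/Λ → V/Λ'` induced by `F`. -/
abbrev torusKerLift : AddSubgroup E := Λ'.toAddSubgroup.comap F.toAddMonoidHom

/-- The kernel `F⁻¹(Λ')/Λ` of the map of tori `E/Λ → V/Λ'` induced by a linear map `F` with
`F(Λ) ⊆ Λ'`. -/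
abbrev torusKer : AddSubgroup (E ⧸ Λ.toAddSubgroup) :=
  (torusKerLift Λ' F).map (QuotientAddGroup.mk' Λ.toAddSubgroup)

/-- The group `π₀(G)` of connected components of a topological group `G`. -/
abbrev ComponentGroup (G : Type*) [TopologicalSpace G] [AddCommGroup G] [IsTopologicalAddGroup G] :
    Type _ :=
  G ⧸ AddSubgroup.connectedComponentOfZero G

/-- The projection of `F⁻¹(Λ')` onto the component group of `F⁻¹(Λ')/Λ`. -/
def toComponentGroup : torusKerLift Λ' F →+ ComponentGroup (torusKer Λ Λ' F) :=
  (QuotientAddGroup.mk' _).comp ((QuotientAddGroup.mk' Λ.toAddSubgroup).addSubgroupMap _)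

theorem toComponentGroup_surjective : Function.Surjective (toComponentGroup Λ Λ' F) :=
  (QuotientAddGroup.mk'_surjective _).comp (AddMonoidHom.addSubgroupMap_surjective _ _)

variable {Λ Λ' F}

theorem isOpen_ker_addSubgroupOf_torusKerLift [FiniteDimensional ℝ E] [DiscreteTopology Λ'] :
    IsOpen (F.toAddMonoidHom.ker.addSubgroupOf (torusKerLift Λ' F) : Set (torusKerLift Λ' F)) := by
  let f : torusKerLift Λ' F → Λ' := fun y ↦ ⟨F y, y.2⟩
  have hf : Continuous f :=
    (F.continuous_of_finiteDimensional.comp continuous_subtype_val).subtype_mk _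
  convert (isOpen_discrete {(0 : Λ')}).preimage hf using 1
  ext y
  simp [f, Subtype.ext_iff, AddSubgroup.mem_addSubgroupOf]

theorem isPreconnected_ker_addSubgroupOf_torusKerLift :
    IsPreconnected
      (F.toAddMonoidHom.ker.addSubgroupOf (torusKerLift Λ' F) : Set (torusKerLift Λ' F)) := by
  have hle : F.toAddMonoidHom.ker ≤ torusKerLift Λ' F := AddSubgroup.comap_mono bot_le
  have hconn : IsPreconnected (F.toAddMonoidHom.ker : Set E) :=
    (LinearMap.ker F).convex.isPreconnected
  rw [← Topology.IsInducing.subtypeVal.isPreconnected_image]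
  convert hconn
  rw [← AddSubgroup.coe_subtype, ← AddSubgroup.coe_map, AddSubgroup.addSubgroupOf_map_subtype,
    inf_eq_left.2 hle]

theorem connectedComponentOfZero_torusKer [FiniteDimensional ℝ E] [DiscreteTopology Λ']
    (hF : ∀ x ∈ Λ, F x ∈ Λ') :
    AddSubgroup.connectedComponentOfZero (torusKer Λ Λ' F) =
      (F.toAddMonoidHom.ker.addSubgroupOf _).map
        ((QuotientAddGroup.mk' Λ.toAddSubgroup).addSubgroupMap _) := by
  refine connectedComponentOfZero_eq_of_isOpen_of_isPreconnected
    (isOpenMap_addSubgroupMap_mk' hF _ isOpen_ker_addSubgroupOf_torusKerLift)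
    (isPreconnected_ker_addSubgroupOf_torusKerLift.image _ ?_)
  have hmk : Continuous fun y : torusKerLift Λ' F ↦ QuotientAddGroup.mk' Λ.toAddSubgroup y :=
    QuotientAddGroup.continuous_mk.comp continuous_subtype_val
  exact (hmk.subtype_mk _).continuousOn

theorem ker_toComponentGroup [FiniteDimensional ℝ E] [DiscreteTopology Λ']
    (hF : ∀ x ∈ Λ, F x ∈ Λ') :
    (toComponentGroup Λ Λ' F).ker =
      (F.toAddMonoidHom.ker ⊔ Λ.toAddSubgroup).addSubgroupOf (torusKerLift Λ' F) := by
  have hle : F.toAddMonoidHom.ker ≤ torusKerLift Λ' F := AddSubgroup.comap_mono bot_le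
  rw [toComponentGroup, ← AddMonoidHom.comap_ker, QuotientAddGroup.ker_mk',
    connectedComponentOfZero_torusKer hF, AddSubgroup.comap_map_eq, AddSubgroup.ker_addSubgroupMap,
    QuotientAddGroup.ker_mk', AddSubgroup.addSubgroupOf_sup hle hF]

theorem isClosed_torusKer [FiniteDimensional ℝ E] [DiscreteTopology Λ']
    (hF : ∀ x ∈ Λ, F x ∈ Λ') :
    IsClosed (torusKer Λ Λ' F : Set (E ⧸ Λ.toAddSubgroup)) := by
  have hpre : QuotientAddGroup.mk' Λ.toAddSubgroup ⁻¹' torusKer Λ Λ' F = torusKerLift Λ' F := by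
    rw [← AddSubgroup.coe_comap, QuotientAddGroup.comap_map_mk', sup_eq_right.2 hF]
  have : DiscreteTopology Λ'.toAddSubgroup := ‹DiscreteTopology Λ'›
  have hclosed : IsClosed (Λ' : Set V) := AddSubgroup.isClosed_of_discrete (H := Λ'.toAddSubgroup)
  rw [← (QuotientAddGroup.isQuotientMap_mk _).isClosed_preimage]
  exact hpre ▸ hclosed.preimage F.continuous_of_finiteDimensional

theorem compactSpace_quotient_of_isZLattice [FiniteDimensional ℝ E] [DiscreteTopology Λ]
    [IsZLattice ℝ Λ] : CompactSpace (E ⧸ Λ.toAddSubgroup) := by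
  rw [← isCompact_univ_iff, ← (QuotientAddGroup.mk'_surjective Λ.toAddSubgroup).range_eq]
  exact IsZLattice.isCompact_range_of_periodic Λ _ QuotientAddGroup.continuous_mk
    fun z w hw ↦ QuotientAddGroup.mk_add_of_mem z hw

theorem finite_componentGroup_torusKer [FiniteDimensional ℝ E] [DiscreteTopology Λ']
    [DiscreteTopology Λ] [IsZLattice ℝ Λ] (hF : ∀ x ∈ Λ, F x ∈ Λ') :
    Finite (ComponentGroup (torusKer Λ Λ' F)) := by
  have := compactSpace_quotient_of_isZLattice (Λ := Λ)
  have := isCompact_iff_compactSpace.1 (isClosed_torusKer hF).isCompact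
  refine AddSubgroup.quotient_finite_of_isOpen _ ?_
  rw [connectedComponentOfZero_torusKer hF]
  exact isOpenMap_addSubgroupMap_mk' hF _ isOpen_ker_addSubgroupOf_torusKerLift

end Torus

section Dual

variable {E : Type*} [NormedAddCommGroup E] [InnerProductSpace ℝ E]

/-- The dual lattice `Λ̂` of vectors having integral inner product with all elements of `Λ`. -/
noncomputable def dualLattice (Λ : Submodule ℤ E) : Submodule ℤ E :=
  LinearMap.BilinForm.dualSubmodule (innerₗ E) Λ

theorem mem_dualLattice {Λ : Submodule ℤ E} {x : E} :
    x ∈ dualLattice Λ ↔ ∀ v ∈ Λ, ∃ n : ℤ, ⟪x, v⟫ = n := by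
  simp only [dualLattice, LinearMap.BilinForm.mem_dualSubmodule, Submodule.mem_one,
    innerₗ_apply_apply, eq_comm, algebraMap_int_eq, eq_intCast]

theorem isTorsionFree_quotient_comap_restrictScalars {K V : Type*} [DivisionRing K] [CharZero K]
    [AddCommGroup V] [Module K V] (Λ : Submodule ℤ V) (W : Submodule K V) :
    Module.IsTorsionFree ℤ (Λ ⧸ (W.restrictScalars ℤ).comap Λ.subtype) := by
  refine Module.isTorsionFree_iff_smul_eq_zero.2 fun n a hna ↦ or_iff_not_imp_left.2 fun hn ↦ ?_
  obtain ⟨v, rfl⟩ := Submodule.mkQ_surjective _ a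
  rw [← map_smul] at hna
  have hnv : n • (v : V) ∈ W :=
    (Submodule.Quotient.mk_eq_zero ((W.restrictScalars ℤ).comap Λ.subtype)).1 hna
  rw [← Int.cast_smul_eq_zsmul K] at hnv
  refine (Submodule.Quotient.mk_eq_zero _).2 ?_
  exact (W.smul_mem_iff (Int.cast_ne_zero.2 hn)).1 hnv

theorem exists_retraction_onto_inter {K V : Type*} [DivisionRing K] [CharZero K]
    [AddCommGroup V] [Module K V] (Λ : Submodule ℤ V) [Module.Finite ℤ Λ] (W : Submodule K V) :
    ∃ r : Λ →ₗ[ℤ] Λ, (∀ v, (r v : V) ∈ W) ∧ ∀ v : Λ, (v : V) ∈ W → r v = v := by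
  let P : Submodule ℤ Λ := (W.restrictScalars ℤ).comap Λ.subtype
  have : Module.IsTorsionFree ℤ (Λ ⧸ P) := isTorsionFree_quotient_comap_restrictScalars Λ W
  obtain ⟨s, hs⟩ := P.mkQ.exists_rightInverse_of_surjective P.range_mkQ
  refine ⟨LinearMap.id - s ∘ₗ P.mkQ, fun v ↦ ?_, fun v hv ↦ ?_⟩
  · have hs' : P.mkQ (s (P.mkQ v)) = P.mkQ v := LinearMap.congr_fun hs (P.mkQ v)
    exact show v - s (P.mkQ v) ∈ P from (Submodule.Quotient.eq P).1 hs'.symm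
  · have : P.mkQ v = 0 := (Submodule.Quotient.mk_eq_zero P).2 hv
    simp only [LinearMap.sub_apply, LinearMap.id_apply, LinearMap.comp_apply, this, map_zero,
      sub_zero]

theorem nondegenerate_innerₗ : LinearMap.BilinForm.Nondegenerate (innerₗ E) :=
  ⟨fun _ hx ↦ inner_self_eq_zero.1 (hx _), fun _ hx ↦ inner_self_eq_zero.1 (hx _)⟩

variable [FiniteDimensional ℝ E] (Λ : Submodule ℤ E) [DiscreteTopology Λ] [IsZLattice ℝ Λ]

theorem exists_inner_eq_of_linearMap (f : Λ →ₗ[ℤ] ℝ) :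
    ∃ z : E, ∀ v : Λ, ⟪z, (v : E)⟫ = f v := by
  let b := Module.Free.chooseBasis ℤ Λ
  let φ : E →ₗ[ℝ] ℝ := (b.ofZLatticeBasis ℝ Λ).constr ℝ fun i ↦ f (b i)
  have hφ : (φ.restrictScalars ℤ) ∘ₗ Λ.subtype = f := b.ext fun i ↦ by
    change φ (b i) = f (b i)
    rw [← b.ofZLatticeBasis_apply ℝ Λ, Module.Basis.constr_basis]
  refine ⟨(InnerProductSpace.toDual ℝ E).symm φ.toContinuousLinearMap, fun v ↦ ?_⟩
  rw [InnerProductSpace.toDual_symm_apply]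
  exact LinearMap.congr_fun hφ v

theorem exists_basis_span_eq_dualLattice :
    ∃ b : Module.Basis (Module.Free.ChooseBasisIndex ℤ Λ) ℝ E,
      Submodule.span ℤ (Set.range b) = dualLattice Λ := by
  classical
  let b := (Module.Free.chooseBasis ℤ Λ).ofZLatticeBasis ℝ Λ
  refine ⟨LinearMap.BilinForm.dualBasis (innerₗ E) nondegenerate_innerₗ b, ?_⟩
  rw [← LinearMap.BilinForm.dualSubmodule_span_of_basis, Module.Basis.ofZLatticeBasis_span,
    dualLattice]

instance discreteTopology_dualLattice : DiscreteTopology (dualLattice Λ) := by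
  obtain ⟨b, hb⟩ := exists_basis_span_eq_dualLattice Λ
  rw [← hb]
  infer_instance

instance isZLattice_dualLattice : IsZLattice ℝ (dualLattice Λ) where
  span_top := by
    obtain ⟨b, hb⟩ := exists_basis_span_eq_dualLattice Λ
    rw [← hb, ZSpan.span_top]

theorem dualLattice_dualLattice : dualLattice (dualLattice Λ) = Λ := by
  have hsymm : LinearMap.BilinForm.IsSymm (innerₗ E) := ⟨fun x y ↦ real_inner_comm y x⟩
  have h := LinearMap.BilinForm.dualSubmodule_dualSubmodule_of_basis (R := ℤ) (innerₗ E)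
    nondegenerate_innerₗ hsymm ((Module.Free.chooseBasis ℤ Λ).ofZLatticeBasis ℝ Λ)
  rwa [Module.Basis.ofZLatticeBasis_span] at h

theorem exists_mem_dualLattice_inner_eq (W : Submodule ℝ E) {x : E}
    (hx : ∀ v ∈ Λ, v ∈ W → ∃ n : ℤ, ⟪x, v⟫ = n) :
    ∃ z ∈ dualLattice Λ, ∀ v ∈ Λ, v ∈ W → ⟪z, v⟫ = ⟪x, v⟫ := by
  obtain ⟨r, hrW, hr⟩ := exists_retraction_onto_inter Λ W
  obtain ⟨z, hz⟩ := exists_inner_eq_of_linearMap Λ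
    ((innerₗ E x).restrictScalars ℤ ∘ₗ Λ.subtype ∘ₗ r)
  refine ⟨z, mem_dualLattice.2 fun v hv ↦ ?_, fun v hv hvW ↦ ?_⟩
  · exact hz ⟨v, hv⟩ ▸ hx _ (r ⟨v, hv⟩).2 (hrW _)
  · exact (hz ⟨v, hv⟩).trans (congrArg (fun u : Λ ↦ ⟪x, (u : E)⟫) (hr ⟨v, hv⟩ hvW))

end Dual

section Duality

open LinearMap (adjoint)

variable {E V : Type*} [NormedAddCommGroup E] [InnerProductSpace ℝ E] [FiniteDimensional ℝ E]
  [NormedAddCommGroup V] [InnerProductSpace ℝ V] [FiniteDimensional ℝ V]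
  {Λ : Submodule ℤ E} {Λ' : Submodule ℤ V} {F : E →ₗ[ℝ] V}

theorem adjoint_mem_dualLattice (hF : ∀ v ∈ Λ, F v ∈ Λ') :
    ∀ x ∈ dualLattice Λ', adjoint F x ∈ dualLattice Λ := by
  intro x hx
  refine mem_dualLattice.2 fun v hv ↦ ?_
  rw [LinearMap.adjoint_inner_left]
  exact mem_dualLattice.1 hx _ (hF v hv)

/-- The pairing `(x, y) ↦ ⟪x, F y⟫ mod 1` of the lifts of the kernels of `V/Λ̂' → E/Λ̂` and
`E/Λ → V/Λ'`, the first of these maps of tori being the one induced by the adjoint of `F`. -/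
noncomputable def torusKerPairing (Λ : Submodule ℤ E) (Λ' : Submodule ℤ V) (F : E →ₗ[ℝ] V) :
    torusKerLift (dualLattice Λ) (adjoint F) →+ torusKerLift Λ' F →+ AddCircle (1 : ℝ) :=
  AddMonoidHom.mk' (fun x ↦ (QuotientAddGroup.mk' _).comp
    ((innerₗ V (x : V) ∘ₗ F).toAddMonoidHom.comp (torusKerLift Λ' F).subtype)) fun a b ↦ by
      ext y
      simp

theorem torusKerPairing_apply_eq_zero_iff {x : torusKerLift (dualLattice Λ) (adjoint F)}
    {y : torusKerLift Λ' F} :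
    torusKerPairing Λ Λ' F x y = 0 ↔ ∃ n : ℤ, ⟪(x : V), F y⟫ = n :=
  addCircle_one_coe_eq_zero_iff

variable [DiscreteTopology Λ] [IsZLattice ℝ Λ]

theorem adjoint_eq_zero_of_inner_eq_zero (hF : ∀ v ∈ Λ, F v ∈ Λ') {x : V}
    (hx : ∀ v ∈ Λ', v ∈ F.range → ⟪x, v⟫ = 0) : adjoint F x = 0 := by
  have hΛ : ∀ v ∈ Λ, (innerₗ E (adjoint F x)) v = (0 : E →ₗ[ℝ] ℝ) v := by
    intro v hv
    rw [innerₗ_apply_apply, LinearMap.adjoint_inner_left]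
    exact hx _ (hF v hv) ⟨v, rfl⟩
  have h0 : innerₗ E (adjoint F x) = 0 := LinearMap.ext_on IsZLattice.span_top hΛ
  exact inner_self_eq_zero.1 (LinearMap.congr_fun h0 _)

variable [DiscreteTopology Λ'] [IsZLattice ℝ Λ']

theorem mem_ker_adjoint_sup_dualLattice_iff (hF : ∀ v ∈ Λ, F v ∈ Λ') {x : V} :
    x ∈ (adjoint F).toAddMonoidHom.ker ⊔ (dualLattice Λ').toAddSubgroup ↔
      ∀ y ∈ torusKerLift Λ' F, ∃ n : ℤ, ⟪x, F y⟫ = n := by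
  rw [AddSubgroup.mem_sup]
  constructor
  · rintro ⟨k, hk, z, hz, rfl⟩ y hy
    have hk : adjoint F k = 0 := hk
    rw [inner_add_left, ← LinearMap.adjoint_inner_left F y k, hk, inner_zero_left, zero_add]
    exact mem_dualLattice.1 hz _ hy
  · intro hx
    obtain ⟨z, hz, hzx⟩ : ∃ z ∈ dualLattice Λ', ∀ v ∈ Λ', v ∈ F.range → ⟪z, v⟫ = ⟪x, v⟫ := by
      refine exists_mem_dualLattice_inner_eq Λ' F.range ?_
      rintro _ hv ⟨y, rfl⟩
      exact hx y hv
    refine ⟨x - z, adjoint_eq_zero_of_inner_eq_zero hF fun v hv hvF ↦ ?_, z, hz, sub_add_cancel x z⟩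
    rw [inner_sub_left, hzx v hv hvF, sub_self]

theorem mem_ker_sup_iff (hF : ∀ v ∈ Λ, F v ∈ Λ') {y : E} :
    y ∈ F.toAddMonoidHom.ker ⊔ Λ.toAddSubgroup ↔
      ∀ x ∈ torusKerLift (dualLattice Λ) (adjoint F), ∃ n : ℤ, ⟪x, F y⟫ = n := by
  have h := mem_ker_adjoint_sup_dualLattice_iff (adjoint_mem_dualLattice hF) (x := y)
  rw [LinearMap.adjoint_adjoint, dualLattice_dualLattice] at h
  simpa only [LinearMap.adjoint_inner_right, real_inner_comm] using h

theorem ker_torusKerPairing (hF : ∀ v ∈ Λ, F v ∈ Λ') :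
    (torusKerPairing Λ Λ' F).ker =
      (toComponentGroup (dualLattice Λ') (dualLattice Λ) (adjoint F)).ker := by
  ext x
  rw [ker_toComponentGroup (adjoint_mem_dualLattice hF), AddSubgroup.mem_addSubgroupOf,
    mem_ker_adjoint_sup_dualLattice_iff hF, AddMonoidHom.mem_ker, DFunLike.ext_iff, Subtype.forall]
  exact forall₂_congr fun y hy ↦
    torusKerPairing_apply_eq_zero_iff (x := x) (y := ⟨y, hy⟩)

theorem ker_flip_torusKerPairing (hF : ∀ v ∈ Λ, F v ∈ Λ') :
    (torusKerPairing Λ Λ' F).flip.ker = (toComponentGroup Λ Λ' F).ker := by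
  ext y
  rw [ker_toComponentGroup hF, AddSubgroup.mem_addSubgroupOf, mem_ker_sup_iff hF,
    AddMonoidHom.mem_ker, DFunLike.ext_iff, Subtype.forall]
  exact forall₂_congr fun x hx ↦
    torusKerPairing_apply_eq_zero_iff (x := ⟨x, hx⟩) (y := y)

theorem stmt_8_general (hF : ∀ v ∈ Λ, F v ∈ Λ') :
    Nonempty (ComponentGroup (torusKer (dualLattice Λ') (dualLattice Λ) (adjoint F)) ≃+
      (ComponentGroup (torusKer Λ Λ' F) →+ AddCircle (1 : ℚ))) ∧
    Finite (ComponentGroup (torusKer (dualLattice Λ') (dualLattice Λ) (adjoint F))) ∧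
    Finite (ComponentGroup (torusKer Λ Λ' F)) ∧
    Nat.card (ComponentGroup (torusKer (dualLattice Λ') (dualLattice Λ) (adjoint F))) =
      Nat.card (ComponentGroup (torusKer Λ Λ' F)) := by
  have finDual := finite_componentGroup_torusKer (adjoint_mem_dualLattice hF)
  have fin := finite_componentGroup_torusKer hF
  obtain ⟨b, hb, hbflip⟩ := exists_nondegenerate_pairing_of_surjective
    (toComponentGroup_surjective _ _ _) (toComponentGroup_surjective _ _ _)
    (torusKerPairing Λ Λ' F) (ker_torusKerPairing hF).symm (ker_flip_torusKerPairing hF).symm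
  let e := AddEquiv.ofBijective b (bijective_of_injective_pairing hb hbflip)
  exact ⟨⟨e.trans (addMonoidHomRatAddCircleEquiv isAddTorsion_of_finite).symm⟩, finDual, fin,
    card_eq_card_of_injective_pairing hb hbflip⟩

end Duality

section Isometry

open LinearMap (adjoint)

variable {E : Type*} [NormedAddCommGroup E] [InnerProductSpace ℝ E]
  {Λ : Submodule ℤ E} {L : E ≃ₗᵢ[ℝ] E} {F : E →ₗ[ℝ] E}

theorem isometry_apply_mem_dualLattice_iff (hL : L '' Λ = Λ) {x : E} :
    L x ∈ dualLattice Λ ↔ x ∈ dualLattice Λ := by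
  calc L x ∈ dualLattice Λ
    _ ↔ ∀ v ∈ L '' Λ, ∃ n : ℤ, ⟪L x, v⟫ = n := by rw [hL, mem_dualLattice]; rfl
    _ ↔ ∀ v ∈ Λ, ∃ n : ℤ, ⟪x, v⟫ = n := by
      simp only [Set.forall_mem_image, L.inner_map_map, SetLike.mem_coe]
    _ ↔ x ∈ dualLattice Λ := mem_dualLattice.symm

variable [FiniteDimensional ℝ E]

theorem apply_adjoint_sub_id (hF : ∀ x, F x = L x - x) (x : E) : L (adjoint F x) = -F x := by
  have h : adjoint F x = L.symm x - x := by
    refine ext_inner_right ℝ fun y ↦ ?_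
    rw [LinearMap.adjoint_inner_left, hF, inner_sub_right, inner_sub_left,
      ← L.inner_map_map (L.symm x) y, L.apply_symm_apply]
  rw [h, hF, map_sub, L.apply_symm_apply, neg_sub]

theorem torusKerLift_adjoint_sub_id (hL : L '' Λ = Λ) (hF : ∀ x, F x = L x - x) :
    torusKerLift (dualLattice Λ) (adjoint F) = torusKerLift (dualLattice Λ) F := by
  ext x
  change adjoint F x ∈ dualLattice Λ ↔ F x ∈ dualLattice Λ
  rw [← isometry_apply_mem_dualLattice_iff hL, apply_adjoint_sub_id hF, neg_mem_iff]

end Isometry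

/-- The group of connected components of `F⁻¹(Λ̂)/Λ̂` (subspace topology in
the torus `t/Λ̂`) is isomorphic to the group of homomorphisms from the group of connected
components of `F⁻¹(Λ)/Λ` to `ℚ/ℤ`; in particular these two component groups are finite
abelian groups of the same cardinality.  (The group of connected components of a topological
group is its quotient by the connected component of the identity, here represented by the
subgroups `N` and `Nhat`.) -/
theorem stmt_8 {t : Type*} [NormedAddCommGroup t] [InnerProductSpace ℝ t]
    [FiniteDimensional ℝ t]
    (Λ : Submodule ℤ t) [DiscreteTopology Λ]
    (hspan : Submodule.span ℝ (Λ : Set t) = ⊤)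
    (L : t ≃ₗᵢ[ℝ] t) (hL : ⇑L '' (Λ : Set t) = (Λ : Set t))
    (F : t →ₗ[ℝ] t) (hF : ∀ x, F x = L x - x)
    (Λhat : Submodule ℤ t)
    (hΛhat : ∀ x : t, x ∈ Λhat ↔ ∀ l ∈ Λ, ∃ n : ℤ, ⟪x, l⟫ = (n : ℝ))
    (N : AddSubgroup (AddSubgroup.map (QuotientAddGroup.mk' Λ.toAddSubgroup)
        (Λ.toAddSubgroup.comap F.toAddMonoidHom)))
    (hN : (N : Set (AddSubgroup.map (QuotientAddGroup.mk' Λ.toAddSubgroup)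
        (Λ.toAddSubgroup.comap F.toAddMonoidHom))) = connectedComponent 0)
    (Nhat : AddSubgroup (AddSubgroup.map (QuotientAddGroup.mk' Λhat.toAddSubgroup)
        (Λhat.toAddSubgroup.comap F.toAddMonoidHom)))
    (hNhat : (Nhat : Set (AddSubgroup.map (QuotientAddGroup.mk' Λhat.toAddSubgroup)
        (Λhat.toAddSubgroup.comap F.toAddMonoidHom))) = connectedComponent 0) :
    Nonempty
      (((AddSubgroup.map (QuotientAddGroup.mk' Λhat.toAddSubgroup)
          (Λhat.toAddSubgroup.comap F.toAddMonoidHom)) ⧸ Nhat) ≃+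
        (((AddSubgroup.map (QuotientAddGroup.mk' Λ.toAddSubgroup)
          (Λ.toAddSubgroup.comap F.toAddMonoidHom)) ⧸ N) →+ AddCircle (1 : ℚ))) ∧
    Finite ((AddSubgroup.map (QuotientAddGroup.mk' Λhat.toAddSubgroup)
        (Λhat.toAddSubgroup.comap F.toAddMonoidHom)) ⧸ Nhat) ∧
    Finite ((AddSubgroup.map (QuotientAddGroup.mk' Λ.toAddSubgroup)
        (Λ.toAddSubgroup.comap F.toAddMonoidHom)) ⧸ N) ∧
    Nat.card ((AddSubgroup.map (QuotientAddGroup.mk' Λhat.toAddSubgroup)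
        (Λhat.toAddSubgroup.comap F.toAddMonoidHom)) ⧸ Nhat) =
      Nat.card ((AddSubgroup.map (QuotientAddGroup.mk' Λ.toAddSubgroup)
        (Λ.toAddSubgroup.comap F.toAddMonoidHom)) ⧸ N) := by
  have : IsZLattice ℝ Λ := ⟨hspan⟩
  obtain rfl : Λhat = dualLattice Λ := Submodule.ext fun x ↦ (hΛhat x).trans mem_dualLattice.symm
  obtain rfl : N = .connectedComponentOfZero _ := SetLike.coe_injective hN
  obtain rfl : Nhat = .connectedComponentOfZero _ := SetLike.coe_injective hNhat
  have hFΛ : ∀ v ∈ Λ, F v ∈ Λ := fun v hv ↦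
    hF v ▸ Λ.sub_mem (hL.subset ⟨v, hv, rfl⟩) hv
  have h := stmt_8_general hFΛ
  rwa [torusKer, torusKerLift_adjoint_sub_id hL hF] at h
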